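/- Let k be a field, R = k[x_1,…,x_d], T = k[y_1,…,y_n], and B = R ⊗_k T, bigraded by bideg x_i = (1,0) and bideg y_j = (0,1). Let f_1,…,f_d be a B-regular sequence of bihomogeneous elements contained in m = (x_1,…,x_d)B with bideg f_i = (α_i,β_i), set S = B/(f_1,…,f_d), δ = (Σα_i) − d, τ = Σβ_i, and A = H^0_m(S). Then for every integer i there is a graded isomorphism of T-modules A_i ≅ Hom_T(S_{δ−i}, T(−τ)). -/

import Mathlib

/-!
STATEMENT 2: With `B = k[x_1,…,x_d] ⊗_k k[y_1,…,y_n]` bigraded as usual,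
`f_1,…,f_d ⊆ m = (x_1,…,x_d)B` a bihomogeneous `B`-regular sequence with
`bideg f_i = (α_i, β_i)`, `S = B/(f_1,…,f_d)`, `δ = (Σα_i) − d`, `τ = Σβ_i` and
`A = H⁰_m(S)`, for every integer `i` there is a graded isomorphism of `T`-modules
`A_i ≅ Hom_T(S_{δ−i}, T(−τ))`.
-/

open MvPolynomial

noncomputable section

namespace Stmt2

variable (k : Type) [Field k] (d n : ℕ)

/-- `B = R ⊗_k T = k[x_1,…,x_d,y_1,…,y_n]`. -/
abbrev B := MvPolynomial (Fin d ⊕ Fin n) k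

/-- `T = k[y_1,…,y_n]`. -/
abbrev T := MvPolynomial (Fin n) k

/-- `B` is a `T`-algebra via `y_j ↦ y_j`. -/
instance : Algebra (T k n) (B k d n) :=
  ((rename Sum.inr : T k n →ₐ[k] B k d n).toRingHom).toAlgebra

/-- The bigrading weight: `bideg x_i = (1,0)`, `bideg y_j = (0,1)`. -/
def bwt : (Fin d ⊕ Fin n) → ℕ × ℕ := Sum.elim (fun _ => (1, 0)) (fun _ => (0, 1))

/-- The `x`-degree weight. -/
def wx : (Fin d ⊕ Fin n) → ℕ := Sum.elim (fun _ => 1) (fun _ => 0)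

/-- The ideal `m = (x_1,…,x_d)B`. -/
def mxB : Ideal (B k d n) := Ideal.span (Set.range fun i : Fin d => (X (Sum.inl i) : B k d n))

variable (I : Ideal (B k d n))

/-- `A = H⁰_m(S)`: elements of `S = B/I` annihilated by a power of `m`. -/
def H0 : Submodule (B k d n) (B k d n ⧸ I) :=
  ⨆ N : ℕ, Submodule.torsionBySet (B k d n) (B k d n ⧸ I)
    ((mxB k d n ^ N : Ideal (B k d n)) : Set (B k d n))

/-- The bigraded component of `S = B/I` in bidegree `p`. -/
def Scomp (p : ℕ × ℕ) : Submodule k (B k d n ⧸ I) :=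
  (weightedHomogeneousSubmodule k (bwt d n) p).map (Ideal.Quotient.mkₐ k I).toLinearMap

/-- The graded strand `S_j = ⊕_b S_{(j,b)}` of `S` in `x`-degree `j`, as a `T`-module. -/
def SxDeg (j : ℕ) : Submodule (T k n) (B k d n ⧸ I) :=
  Submodule.span (T k n) ((Ideal.Quotient.mk I) '' {g : B k d n | g.IsWeightedHomogeneous (wx d n) j})

/-- The graded strand of `S` in (possibly negative) `x`-degree `i : ℤ`. -/
def SxDegZ (i : ℤ) : Submodule (T k n) (B k d n ⧸ I) :=
  if 0 ≤ i then SxDeg k d n I i.toNat else ⊥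

/-- The graded strand `A_i = ⊕_b A_{(i,b)}` of `A = H⁰_m(S)`, as a `T`-module. -/
def AcompZ (i : ℤ) : Submodule (T k n) (B k d n ⧸ I) :=
  (H0 k d n I).restrictScalars (T k n) ⊓ SxDegZ k d n I i

/-- The graded component of `T` in (possibly negative) degree `j`. -/
def TcompZ (j : ℤ) : Submodule k (T k n) :=
  if 0 ≤ j then homogeneousSubmodule (Fin n) k j.toNat else ⊥

/-!
Linkage by powers of the variables.  Let `J = (x_1 ^ (M + 1), …, x_d ^ (M + 1))`.  A bicomplex
argument on the tensor product of the Koszul complexes of `f` and of the generators of `J`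
identifies `(J : f) / J` with `(f : J) / (f)`, which is `A` for large `M`.
On the other hand `B / J` is free over `T` with a perfect pairing into the span of the socle
monomial `(x_1 ⋯ x_d) ^ M`, and the functionals on its strands that vanish on multiples of the
`f_i` are the pairings with elements of `J : f`.  For `M ≥ j` the strand of `B / J` in `x`-degree
`j` is that of `B` itself.  Comparing socle degrees gives the shifts `δ` and `τ`.
-/

section Zigzag

variable {A : Type*} [CommRing A] {X : ℕ → ℕ → Type*} [∀ p q, AddCommGroup (X p q)]
  [∀ p q, Module A (X p q)] (dh : ∀ p q, X (p + 1) q →ₗ[A] X p q)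
  (dv : ∀ p q, X p (q + 1) →ₗ[A] X p q)

/-- The families `z` with `dh z_{p+1,q} = dv z_{p,q+1}` in a double complex with commuting
differentials `dh`, `dv`.  Only the anti-diagonals interact, so that a zigzag bundles one
staircase for every total degree. -/
def zigzag : Submodule A (∀ p q, X p q) where
  carrier := {z | ∀ p q, dh p q (z (p + 1) q) = dv p q (z p (q + 1))}
  add_mem' hz hz' p q := by simp [hz p q, hz' p q]
  zero_mem' p q := by simp
  smul_mem' c z hz p q := by simp [hz p q]

variable {dh dv}

variable (comm : ∀ p q y, dh p q (dv (p + 1) q y) = dv p q (dh p (q + 1) y))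
  (dv_dv : ∀ p q y, dv p q (dv p (q + 1) y) = 0)
  (exact : ∀ p q, Function.Exact (dh (p + 1) q) (dh p q))

include comm dv_dv exact

lemma zigzag_succ_mem_range_sup_range {z : ∀ p q, X p q} (hz : z ∈ zigzag dh dv) {p q : ℕ}
    (h : z p (q + 1) ∈ (dh p (q + 1)).range ⊔ (dv p (q + 1)).range) :
    z (p + 1) q ∈ (dh (p + 1) q).range ⊔ (dv (p + 1) q).range := by
  obtain ⟨_, ⟨a, rfl⟩, _, ⟨b, rfl⟩, hab⟩ := Submodule.mem_sup.1 h
  have hcycle : dh p q (z (p + 1) q - dv (p + 1) q a) = 0 := by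
    rw [map_sub, hz, ← hab, map_add, dv_dv, add_zero, comm, sub_self]
  obtain ⟨c, hc⟩ := (exact p q _).1 hcycle
  exact Submodule.mem_sup.2 ⟨_, ⟨c, rfl⟩, _, ⟨a, rfl⟩, by rw [hc, sub_add_cancel]⟩

lemma zigzag_corner_mem_range_sup_range {z : ∀ p q, X p q} (hz : z ∈ zigzag dh dv) {d : ℕ}
    (h : z 0 d ∈ (dh 0 d).range ⊔ (dv 0 d).range) : z d 0 ∈ (dh d 0).range ⊔ (dv d 0).range := by
  suffices ∀ q p, p + q = d → z p q ∈ (dh p q).range ⊔ (dv p q).range →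
      z d 0 ∈ (dh d 0).range ⊔ (dv d 0).range from this d 0 d.zero_add h
  intro q
  induction q with
  | zero => rintro p rfl hp; exact hp
  | succ q ih =>
    exact fun p hpq hp => ih (p + 1) (by omega)
      (zigzag_succ_mem_range_sup_range comm dv_dv exact hz hp)

lemma exists_zigzag_extending (z₀ : ∀ q, X 0 q) (h : ∀ q, dv 0 q (z₀ (q + 1)) ∈ (dh 0 q).range) :
    ∃ z ∈ zigzag dh dv, z 0 = z₀ := by
  let Column (p : ℕ) := {c : ∀ q, X p q // ∀ q, dv p q (c (q + 1)) ∈ (dh p q).range}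
  have next (p : ℕ) (c : Column p) : ∃ c' : Column (p + 1), ∀ q,
      dh p q (c'.1 q) = dv p q (c.1 (q + 1)) := by
    choose c' hc' using c.2
    refine ⟨⟨c', fun q => (exact p q _).1 ?_⟩, hc'⟩
    rw [comm, hc', dv_dv]
  choose next hnext using next
  let column : ∀ p, Column p := Nat.rec ⟨z₀, h⟩ next
  exact ⟨fun p => (column p).1, fun p q => hnext p (column p) q, rfl⟩

end Zigzag

section Koszul

universe u
variable {ι : Type u}

/-- The index set of the standard basis of the `p`-th exterior power of a free module with basis
the entries of the list `L`: the ways to select `p` entries of `L`. -/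
inductive Selection : List ι → ℕ → Type u
  | nil : Selection [] 0
  | skip {i : ι} {L : List ι} {p : ℕ} (s : Selection L p) : Selection (i :: L) p
  | take {i : ι} {L : List ι} {p : ℕ} (s : Selection L p) : Selection (i :: L) (p + 1)

open Selection

namespace Selection

instance uniqueZero : (L : List ι) → Unique (Selection L 0)
  | [] => ⟨⟨nil⟩, fun | nil => rfl⟩
  | _ :: L => ⟨⟨skip (uniqueZero L).default⟩, fun | skip s => congrArg skip ((uniqueZero L).uniq s)⟩

lemma le_length {L : List ι} {p : ℕ} (s : Selection L p) : p ≤ L.length := by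
  induction s <;> simp_all; omega

instance uniqueLength : (L : List ι) → Unique (Selection L L.length)
  | [] => ⟨⟨nil⟩, fun | nil => rfl⟩
  | _ :: L => ⟨⟨take (uniqueLength L).default⟩, fun
    | skip s => absurd s.le_length (by simp)
    | take s => congrArg take ((uniqueLength L).uniq s)⟩

end Selection

variable {A M N : Type*} [CommRing A] [AddCommGroup M] [Module A M] [AddCommGroup N] [Module A N]

/-- The Koszul differential on the `M`-valued chains over the sequence `f i`, `i ∈ L`, where a
chain of degree `p` is a function on the selections of `p` entries of `L`. -/
def koszulD (f : ι → A) :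
    (L : List ι) → (p : ℕ) → (Selection L (p + 1) → M) →ₗ[A] (Selection L p → M)
  | [], _ => 0
  | i :: L, p => LinearMap.pi fun
    | skip s => LinearMap.proj s ∘ₗ koszulD f L p ∘ₗ LinearMap.funLeft A M skip +
        f i • LinearMap.proj (take s)
    | take (p := p) s => -(LinearMap.proj s ∘ₗ koszulD f L p ∘ₗ LinearMap.funLeft A M take)

variable (f : ι → A) {i : ι} {L : List ι} {p : ℕ}

lemma koszulD_comp_skip (y : Selection (i :: L) (p + 1) → M) :
    koszulD f (i :: L) p y ∘ skip = koszulD f L p (y ∘ skip) + f i • (y ∘ take) := rfl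

lemma koszulD_comp_take (y : Selection (i :: L) (p + 2) → M) :
    koszulD f (i :: L) (p + 1) y ∘ take = -koszulD f L p (y ∘ take) := rfl

lemma koszulD_skip (y : Selection (i :: L) (p + 1) → M) (s : Selection L p) :
    koszulD f (i :: L) p y (skip s) = koszulD f L p (y ∘ skip) s + f i • y (take s) := rfl

lemma koszulD_take (y : Selection (i :: L) (p + 2) → M) (s : Selection L p) :
    koszulD f (i :: L) (p + 1) y (take s) = -koszulD f L p (y ∘ take) s := rfl

lemma koszulD_koszulD (L : List ι) (p : ℕ) (y : Selection L (p + 2) → M) :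
    koszulD f L p (koszulD f L (p + 1) y) = 0 := by
  induction L generalizing p with
  | nil => rfl
  | cons i L ih =>
    ext s
    cases s with
    | skip s =>
      rw [koszulD_skip, koszulD_comp_skip, koszulD_take, map_add, ih, map_smul]
      simp
    | take s => simp [koszulD_take, koszulD_comp_take, ih]

lemma koszulD_map (g : M →ₗ[A] N) (L : List ι) (p : ℕ) (y : Selection L (p + 1) → M)
    (s : Selection L p) : koszulD f L p (g ∘ y) s = g (koszulD f L p y s) := by
  induction L generalizing p with
  | nil => exact (map_zero g).symm
  | cons i L ih => cases s <;> simp [koszulD_skip, koszulD_take, Function.comp_assoc, ih]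

lemma koszulD_apply_apply {κ : Type*} (y : Selection L (p + 1) → κ → M) (s : Selection L p)
    (t : κ) : koszulD f L p y s t = koszulD f L p (fun s => y s t) s :=
  (koszulD_map f (LinearMap.proj t) L p y s).symm

lemma mem_range_koszulD_pi {κ : Type*} {y : Selection L p → κ → M} :
    y ∈ (koszulD f L p).range ↔ ∀ t, (fun s => y s t) ∈ (koszulD f L p).range := by
  constructor
  · rintro ⟨v, rfl⟩ t
    exact ⟨fun s => v s t, funext fun s => (koszulD_apply_apply f v s t).symm⟩
  · intro h
    choose v hv using h
    exact ⟨fun s t => v t s, funext₂ fun s t =>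
      (koszulD_apply_apply f _ s t).trans (congrFun (hv t) s)⟩

lemma koszulD_mem {P : Submodule A M} {y : Selection L (p + 1) → M}
    (h : ∀ i ∈ L, ∀ t, f i • y t ∈ P) (s : Selection L p) : koszulD f L p y s ∈ P := by
  induction L generalizing p with
  | nil => exact P.zero_mem
  | cons i L ih =>
    cases s with
    | skip s =>
      exact P.add_mem (ih (fun j hj t => h j (.tail i hj) _) s) (h i (.head L) _)
    | take s => exact P.neg_mem (ih (fun j hj t => h j (.tail i hj) _) s)

lemma mem_range_koszulD_zero {y : Selection L 0 → A} :
    y ∈ (koszulD f L 0).range ↔ y default ∈ Ideal.ofList (L.map f) := by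
  constructor
  · rintro ⟨v, rfl⟩
    refine koszulD_mem f (fun i hi t => ?_) default
    exact Ideal.mul_mem_right _ _ (Ideal.subset_span (List.mem_map_of_mem hi))
  · induction L with
    | nil =>
      intro h
      exact ⟨0, funext fun s => by simpa [Unique.eq_default s, eq_comm] using h⟩
    | cons i L ih =>
      intro h
      rw [List.map_cons, Ideal.ofList_cons] at h
      obtain ⟨_, ha, b, hb, hab⟩ := Submodule.mem_sup.1 h
      obtain ⟨c, rfl⟩ := Ideal.mem_span_singleton.1 ha
      obtain ⟨v, hv⟩ := ih (y := fun _ => b) hb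
      refine ⟨fun | skip t => v t | take _ => c, funext fun s => ?_⟩
      obtain rfl := Unique.eq_default s
      exact (congrArg (· + f i * c) (congrFun hv default)).trans ((add_comm _ _).trans hab)

open scoped Pointwise in
lemma mkQ_smul_top_eq_zero_iff {r : A} {m : M} :
    (r • (⊤ : Submodule A M)).mkQ m = 0 ↔ ∃ e, r • e = m := by
  rw [Submodule.mkQ_apply, Submodule.Quotient.mk_eq_zero]
  simp [Submodule.mem_smul_pointwise_iff_exists]

lemma exact_koszulD {M : Type*} [AddCommGroup M] [Module A M]
    (h : RingTheory.Sequence.IsWeaklyRegular M (L.map f)) (p : ℕ) :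
    Function.Exact (koszulD (M := M) f L (p + 1)) (koszulD f L p) := by
  refine LinearMap.exact_iff.2 (le_antisymm ?_ (LinearMap.range_le_ker_iff.2 <|
    LinearMap.ext (koszulD_koszulD f L p)))
  induction L generalizing M p with
  | nil => exact fun y _ => ⟨0, funext fun s => nomatch s⟩
  | cons i L ih =>
    intro y hy
    obtain ⟨hi, hL⟩ := (RingTheory.Sequence.isWeaklyRegular_cons_iff M (f i) (L.map f)).1 h
    let π : M →ₗ[A] QuotSMulTop (f i) M := Submodule.mkQ _
    have hskip : koszulD f L p (y ∘ skip) + f i • (y ∘ take) = 0 := congrArg (· ∘ skip) hy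
    have hcycle : koszulD f L p (π ∘ y ∘ skip) = 0 := by
      ext s
      rw [koszulD_map, eq_neg_of_add_eq_zero_left hskip]
      exact mkQ_smul_top_eq_zero_iff.2 ⟨-y (take s), smul_neg (f i) _⟩
    obtain ⟨c', hc'⟩ := ih hL p hcycle
    choose c hc using fun s => Submodule.mkQ_surjective _ (c' s)
    obtain rfl : π ∘ c = c' := funext hc
    have hdiv (s) : ∃ e, f i • e = y (skip s) - koszulD f L (p + 1) c s := by
      refine mkQ_smul_top_eq_zero_iff.1 ?_
      rw [map_sub, sub_eq_zero]
      exact (congrFun hc' s).symm.trans (koszulD_map f π L (p + 1) c s)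
    choose e he using hdiv
    have htake : y ∘ take = -koszulD f L p e := by
      have hskip' : y ∘ skip = koszulD f L (p + 1) c + f i • e :=
        funext fun s => by simp [he]
      rw [hskip', map_add, koszulD_koszulD, zero_add, map_smul, ← smul_add] at hskip
      exact eq_neg_of_add_eq_zero_right (funext fun s => hi (by simpa using congrFun hskip s))
    refine ⟨fun | skip s => c s | take s => e s, funext fun s => ?_⟩
    cases s with
    | skip s =>
      change koszulD f L (p + 1) c s + f i • e s = _
      rw [he, add_sub_cancel]
    | take s => exact (congrFun htake s).symm

end Koszul

section Linkage

variable {ι A : Type*} [CommRing A] (f x : ι → A) (L : List ι)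

/-- The chains of bidegree `(p, q)` in the tensor product of two Koszul complexes over `L`. -/
abbrev KoszulBichain (A : Type*) (L : List ι) (p q : ℕ) := Selection L p → Selection L q → A

/-- The pairs of opposite corners of the zigzags in the tensor product of the Koszul complexes of
`f` and of `x` over the entries of `L`.  When both sequences are weakly regular this is the graph
of the isomorphism `((f) : (x)) / (f) ≅ ((x) : (f)) / (x)` modulo `(f) × (x)`. -/
def linkage : Submodule A (A × A) where
  carrier := {c | ∃ z ∈ zigzag (X := KoszulBichain A L)
    (fun p _ => koszulD f L p) (fun p q => (koszulD x L q).compLeft (Selection L p)),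
    z 0 L.length default default = c.1 ∧ z L.length 0 default default = c.2}
  add_mem' := by
    rintro _ _ ⟨z, hz, hu, hw⟩ ⟨z', hz', hu', hw'⟩
    exact ⟨z + z', add_mem hz hz', congrArg₂ _ hu hu', congrArg₂ _ hw hw'⟩
  zero_mem' := ⟨0, zero_mem _, rfl, rfl⟩
  smul_mem' := by
    rintro c _ ⟨z, hz, hu, hw⟩
    exact ⟨c • z, Submodule.smul_mem _ c hz, congrArg _ hu, congrArg _ hw⟩

variable {f x L}

lemma mem_linkage {u w : A} : (u, w) ∈ linkage f x L ↔
    ∃ z : ∀ p q, KoszulBichain A L p q,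
      (∀ p q, koszulD f L p (z (p + 1) q) = fun s => koszulD x L q (z p (q + 1) s)) ∧
      z 0 L.length default default = u ∧ z L.length 0 default default = w := Iff.rfl

lemma swap_mem_linkage {u w : A} (h : (u, w) ∈ linkage f x L) : (w, u) ∈ linkage x f L := by
  obtain ⟨z, hz, rfl, rfl⟩ := mem_linkage.1 h
  refine mem_linkage.2 ⟨fun p q s t => z q p t s, fun p q => funext₂ fun s t => ?_, rfl, rfl⟩
  rw [koszulD_apply_apply, ← koszulD_apply_apply, hz]

lemma koszulD_koszulD_comm (p q : ℕ) (y : Selection L (p + 1) → Selection L (q + 1) → A) :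
    koszulD f L p (fun s => koszulD x L q (y s)) = fun s => koszulD x L q (koszulD f L p y s) :=
  funext (koszulD_map f (koszulD x L q) L p y)

variable (hf : RingTheory.Sequence.IsWeaklyRegular A (L.map f))

include hf

lemma exact_koszulD_pi {κ : Type*} (p : ℕ) :
    Function.Exact (koszulD (M := κ → A) f L (p + 1)) (koszulD f L p) := by
  refine LinearMap.exact_iff.2 (le_antisymm (fun y hy => ?_)
    (LinearMap.range_le_ker_iff.2 <| LinearMap.ext (koszulD_koszulD f L p)))
  refine (mem_range_koszulD_pi f).2 fun t => (exact_koszulD f hf p _).1 (funext fun s => ?_)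
  rw [← koszulD_apply_apply, hy]
  rfl

lemma right_mem_of_mem_linkage {u w : A} (h : (u, w) ∈ linkage f x L)
    (hu : u ∈ Ideal.ofList (L.map f)) : w ∈ Ideal.ofList (L.map x) := by
  obtain ⟨z, hz, rfl, rfl⟩ := h
  have hcorner : z 0 L.length ∈ (koszulD f L 0).range := by
    refine (mem_range_koszulD_pi f).2 fun t => (mem_range_koszulD_zero f).2 ?_
    rwa [Unique.eq_default t]
  obtain ⟨_, ⟨a, rfl⟩, _, ⟨b, rfl⟩, hab⟩ := Submodule.mem_sup.1 <|
    zigzag_corner_mem_range_sup_range (X := KoszulBichain A L) (koszulD_koszulD_comm · ·)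
      (fun p q y => funext fun s => koszulD_koszulD x L q (y s))
      (fun p _ => exact_koszulD_pi hf p) hz (Submodule.mem_sup_left hcorner)
  have ha : a = 0 := funext fun s => absurd s.le_length (by simp)
  rw [← hab, ha, map_zero, zero_add]
  exact (mem_range_koszulD_zero x).1 ⟨b default, rfl⟩

lemma exists_mem_linkage {u : A} (hu : ∀ i ∈ L, x i * u ∈ Ideal.ofList (L.map f)) :
    ∃ w, (u, w) ∈ linkage f x L := by
  let z₀ (q : ℕ) (_ : Selection L 0) (_ : Selection L q) : A := if q = L.length then u else 0
  have hz₀ (q : ℕ) : (koszulD x L q).compLeft (Selection L 0) (z₀ (q + 1)) ∈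
      (koszulD f L 0).range := by
    refine (mem_range_koszulD_pi f).2 fun t => (mem_range_koszulD_zero f).2 ?_
    refine koszulD_mem x (fun i hi s => ?_) t
    simp only [z₀]
    split_ifs with hq
    exacts [hu i hi, by simp]
  obtain ⟨z, hz, hz0⟩ := exists_zigzag_extending (X := KoszulBichain A L)
    (dv := fun p q => (koszulD x L q).compLeft (Selection L p)) (koszulD_koszulD_comm · ·)
    (fun p q y => funext fun s => koszulD_koszulD x L q (y s))
    (fun p _ => exact_koszulD_pi hf p) z₀ hz₀
  exact ⟨_, z, hz, by simp [hz0, z₀], rfl⟩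

end Linkage

section GradedLinkage

open Selection

variable {ι G : Type*} [AddCommGroup G] {γ ξ : ι → G} {L : List ι}

namespace Selection

/-- The degree of a basis element of an exterior power when the `i`-th generator has degree
`γ i`. -/
def degree (γ : ι → G) : {L : List ι} → {p : ℕ} → Selection L p → G
  | _, _, nil => 0
  | _, _, skip s => s.degree γ
  | _, _, take (i := i) s => γ i + s.degree γ

lemma degree_default_zero (L : List ι) : (default : Selection L 0).degree γ = 0 := by
  induction L with
  | nil => rfl
  | cons _ _ ih => exact ih

lemma degree_default_length (L : List ι) :
    (default : Selection L L.length).degree γ = (L.map γ).sum := by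
  induction L with
  | nil => rfl
  | cons i L ih => exact congrArg (γ i + ·) ih

end Selection

variable [DecidableEq G] {A σ : Type*} [CommRing A] [SetLike σ A] [AddSubmonoidClass σ A]
  (𝒜 : G → σ) [GradedRing 𝒜] {f x : ι → A}

lemma koszulD_proj (hf : ∀ i, f i ∈ 𝒜 (γ i)) (P : G) {p : ℕ} (y : Selection L (p + 1) → A)
    (s : Selection L p) :
    koszulD f L p (fun t => GradedRing.proj 𝒜 (P - t.degree γ) (y t)) s =
      GradedRing.proj 𝒜 (P - s.degree γ) (koszulD f L p y s) := by
  induction L generalizing P p with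
  | nil => exact (map_zero _).symm
  | cons i L ih =>
    cases s with
    | skip s =>
      have hsmul : GradedRing.proj 𝒜 (P - s.degree γ) (f i * y (take s)) =
          f i * GradedRing.proj 𝒜 (P - (γ i + s.degree γ)) (y (take s)) := by
        rw [← add_sub_cancel (γ i) (P - s.degree γ), sub_sub, add_comm (s.degree γ)]
        exact DirectSum.coe_decompose_mul_add_of_left_mem 𝒜 (hf i)
      rw [koszulD_skip, koszulD_skip, map_add, smul_eq_mul, smul_eq_mul]
      exact congrArg₂ _ (ih P (y ∘ skip) s) hsmul.symm
    | take s =>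
      rw [koszulD_take, koszulD_take, map_neg]
      simp only [Function.comp_def, degree, ← sub_sub]
      exact congrArg _ (ih (P - γ i) (y ∘ take) s)

lemma proj_mem_linkage (hf : ∀ i, f i ∈ 𝒜 (γ i)) (hx : ∀ i, x i ∈ 𝒜 (ξ i)) {u w : A}
    (h : (u, w) ∈ linkage f x L) {P Q : G} (hPQ : P + (L.map ξ).sum = Q + (L.map γ).sum) :
    (GradedRing.proj 𝒜 P u, GradedRing.proj 𝒜 Q w) ∈ linkage f x L := by
  obtain ⟨z, hz, rfl, rfl⟩ := mem_linkage.1 h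
  let total := P + (L.map ξ).sum
  refine mem_linkage.2 ⟨fun p q s t =>
    GradedRing.proj 𝒜 (total - s.degree γ - t.degree ξ) (z p q s t), fun p q => ?_, ?_, ?_⟩
  · funext s t
    have hleft := koszulD_proj 𝒜 hf (total - t.degree ξ) (fun s => z (p + 1) q s t) s
    simp only [sub_right_comm] at hleft
    rw [koszulD_apply_apply, hleft, koszulD_proj 𝒜 hx, ← koszulD_apply_apply, hz]
  · simp [degree_default_zero, degree_default_length, total]
  · simp [degree_default_zero, degree_default_length, total, hPQ]

end GradedLinkage

section Weighted

variable {σ R M N : Type*} [CommSemiring R] [AddCommMonoid M] [AddCommMonoid N]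

lemma map_weight (φ : M →+ N) (w : σ → M) (m : σ →₀ ℕ) :
    φ (Finsupp.weight w m) = Finsupp.weight (φ ∘ w) m := by
  simp [Finsupp.weight_apply, Finsupp.sum]

lemma isWeightedHomogeneous_map {w : σ → M} {g : MvPolynomial σ R} {m : M}
    (h : g.IsWeightedHomogeneous w m) (φ : M →+ N) :
    g.IsWeightedHomogeneous (φ ∘ w) (φ m) := fun e he => by
  rw [← map_weight, h he]

lemma isWeightedHomogeneous_map_iff {φ : M →+ N} (hφ : Function.Injective φ) {w : σ → M}
    {g : MvPolynomial σ R} {m : M} :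
    g.IsWeightedHomogeneous (φ ∘ w) (φ m) ↔ g.IsWeightedHomogeneous w m :=
  ⟨fun h e he => hφ (by rw [map_weight, h he]), fun h => isWeightedHomogeneous_map h φ⟩

lemma eq_zero_of_isWeightedHomogeneous_of_neg {w : σ → ℤ} (hw : ∀ s, 0 ≤ w s)
    {g : MvPolynomial σ R} {m : ℤ} (h : g.IsWeightedHomogeneous w m) (hm : m < 0) : g = 0 := by
  ext e
  by_contra he
  have hnonneg : 0 ≤ Finsupp.weight w e :=
    Finset.sum_nonneg fun s _ => nsmul_nonneg (hw s) (e s)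
  exact absurd (h he) (by omega)

variable {R : Type*} [CommRing R] {w : σ → M}

attribute [local instance] MvPolynomial.weightedGradedAlgebra

lemma proj_eq_weightedHomogeneousComponent [DecidableEq M] (m : M) (g : MvPolynomial σ R) :
    GradedRing.proj (weightedHomogeneousSubmodule R w) m g =
      weightedHomogeneousComponent w m g :=
  weightedDecomposition.decompose'_apply R w g m

lemma weightedHomogeneousComponent_mem_span_range {ι : Type*} {f : ι → MvPolynomial σ R}
    {γ : ι → M} (hf : ∀ i, (f i).IsWeightedHomogeneous w (γ i)) {g : MvPolynomial σ R}
    (hg : g ∈ Ideal.span (Set.range f)) (m : M) :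
    weightedHomogeneousComponent w m g ∈ Ideal.span (Set.range f) := by
  classical
  refine weightedHomogeneousComponent_mem_of_mem R w (Ideal.homogeneous_span _ _ ?_) hg m
  rintro _ ⟨i, rfl⟩
  exact ⟨γ i, hf i⟩

lemma weightedHomogeneousComponent_mem_linkage {G : Type*} [AddCommGroup G]
    {w : σ → G} {ι : Type*} {f x : ι → MvPolynomial σ R} {γ ξ : ι → G} {L : List ι}
    (hf : ∀ i, (f i).IsWeightedHomogeneous w (γ i))
    (hx : ∀ i, (x i).IsWeightedHomogeneous w (ξ i)) {u v : MvPolynomial σ R}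
    (h : (u, v) ∈ linkage f x L) {P Q : G} (hPQ : P + (L.map ξ).sum = Q + (L.map γ).sum) :
    (weightedHomogeneousComponent w P u, weightedHomogeneousComponent w Q v) ∈
      linkage f x L := by
  classical
  simpa only [proj_eq_weightedHomogeneousComponent] using
    proj_mem_linkage (weightedHomogeneousSubmodule R w) hf hx h hPQ

end Weighted

section VariablePowers

lemma ofList_map_finRange {A : Type*} [CommRing A] {d : ℕ} (f : Fin d → A) :
    Ideal.ofList ((List.finRange d).map f) = Ideal.span (Set.range f) := by
  refine congrArg Ideal.span (Set.ext fun a => ?_)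
  simp

variable {ι σ R : Type*} [CommRing R] {v : ι → σ} {l : List ι} {N : ℕ}

lemma mem_ofList_X_pow {g : MvPolynomial σ R} :
    g ∈ Ideal.ofList (l.map fun i => (X (v i) : MvPolynomial σ R) ^ N) ↔
      ∀ m ∈ g.support, ∃ i ∈ l, N ≤ m (v i) := by
  have hspan : Ideal.ofList (l.map fun i => (X (v i) : MvPolynomial σ R) ^ N) =
      Ideal.span ((fun m => monomial m 1) '' {m | ∃ i ∈ l, Finsupp.single (v i) N = m}) := by
    refine congrArg Ideal.span (Set.ext fun g => ?_)
    simp [X_pow_eq_monomial]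
  simp [hspan, mem_ideal_span_monomial_image, Finsupp.single_le_iff]

lemma isWeaklyRegular_X_pow (hv : Function.Injective v) (hl : l.Nodup) (N : ℕ) :
    RingTheory.Sequence.IsWeaklyRegular (MvPolynomial σ R)
      (l.map fun i => (X (v i) : MvPolynomial σ R) ^ N) := by
  refine (RingTheory.Sequence.isWeaklyRegular_iff _ _).2 fun r hr => ?_
  rw [List.length_map] at hr
  rw [isSMulRegular_quotient_iff_mem_of_smul_mem, smul_eq_mul, Ideal.mul_top, ← List.map_take]
  intro g hg
  rw [mem_ofList_X_pow] at hg ⊢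
  intro m hm
  obtain ⟨i, hi, hN⟩ := hg (Finsupp.single (v l[r]) N + m) (by
    simpa [X_pow_eq_monomial, coeff_monomial_mul] using hm)
  have hne : i ≠ l[r] := by
    rintro rfl
    obtain ⟨s, hs, hsr⟩ := List.mem_take_iff_getElem.1 hi
    have := (List.Nodup.getElem_inj_iff hl).1 hsr
    omega
  exact ⟨i, hi, by simpa [Finsupp.single_apply, hv.eq_iff, hne.symm] using hN⟩

end VariablePowers

section Bigraded

variable {k d n}

lemma smul_eq_rename_mul (t : T k n) (g : B k d n) : t • g = rename Sum.inr t * g :=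
  Algebra.smul_def t g

lemma exists_eq_sumElim (m : Fin d ⊕ Fin n →₀ ℕ) : ∃ a q, m = Finsupp.sumElim a q :=
  ⟨_, _, (Finsupp.comapDomain_sumElim_comapDomain m).symm⟩

/-- The coefficient in `T` of the monomial in `x_1, …, x_d` with exponent `a`. -/
def xCoeff (a : Fin d →₀ ℕ) : B k d n →ₗ[T k n] T k n where
  toFun g := coeff a (sumAlgEquiv k (Fin d) (Fin n) g)
  map_add' g h := by simp
  map_smul' t g := by
    have ht : sumAlgEquiv k (Fin d) (Fin n) (rename Sum.inr t) = C t :=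
      DFunLike.congr_fun (sumAlgEquiv_comp_rename_inr k (Fin d) (Fin n)) t
    rw [smul_eq_rename_mul, map_mul, ht, coeff_C_mul]
    rfl

/-- The monomial in `x_1, …, x_d` with exponent `a`. -/
def xMonomial (a : Fin d →₀ ℕ) : B k d n := monomial (Finsupp.sumElim a 0) 1

lemma coeff_xCoeff (a : Fin d →₀ ℕ) (q : Fin n →₀ ℕ) (g : B k d n) :
    coeff q (xCoeff a g) = coeff (Finsupp.sumElim a q) g := by
  change _ = g.coeff (Finsupp.sumFinsuppAddEquivProdFinsupp.symm (a, q))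
  simp [xCoeff, sumAlgEquiv, coeff, AddMonoidAlgebra.curryAlgEquiv,
    AddMonoidAlgebra.curryRingEquiv, AddMonoidAlgebra.curryAddEquiv]

lemma xCoeff_mul_xMonomial (a b : Fin d →₀ ℕ) (g : B k d n) :
    xCoeff (a + b) (g * xMonomial b) = xCoeff a g := by
  ext q
  rw [coeff_xCoeff, coeff_xCoeff, xMonomial, ← add_zero q, Finsupp.sumElim_add,
    coeff_mul_monomial, mul_one, add_zero]

lemma xCoeff_xMonomial (a b : Fin d →₀ ℕ) :
    xCoeff a (xMonomial b : B k d n) = if a = b then 1 else 0 := by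
  ext q
  have hiff : Finsupp.sumElim b 0 = Finsupp.sumElim a q ↔ a = b ∧ 0 = q := by
    simpa [eq_comm] using Finsupp.sumFinsuppAddEquivProdFinsupp.symm.injective.eq_iff
      (a := (b, (0 : Fin n →₀ ℕ))) (b := (a, q))
  rw [coeff_xCoeff, xMonomial, coeff_monomial]
  simp only [hiff]
  split_ifs <;> simp_all [coeff_one]

lemma monomial_sumElim (a : Fin d →₀ ℕ) (q : Fin n →₀ ℕ) (c : k) :
    (monomial (Finsupp.sumElim a q) c : B k d n) = (monomial q c : T k n) • xMonomial a := by
  rw [smul_eq_rename_mul, rename_monomial, xMonomial, monomial_mul, mul_one,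
    Finsupp.sumElim_eq_add, Finsupp.sumElim_eq_add, Finsupp.mapDomain_zero, add_zero, add_comm]

end Bigraded

section Weights

/-- The `x`-degree `wx` with values in `ℤ`, so that negative degrees make sense. -/
def xWeight (d n : ℕ) : Fin d ⊕ Fin n → ℤ := Sum.elim (fun _ => 1) (fun _ => 0)

/-- The bidegree `bwt` with values in `ℤ × ℤ`, so that negative degrees make sense. -/
def biWeight (d n : ℕ) : Fin d ⊕ Fin n → ℤ × ℤ := Sum.elim (fun _ => (1, 0)) (fun _ => (0, 1))

variable {k d n}

lemma weight_xWeight (a : Fin d →₀ ℕ) (q : Fin n →₀ ℕ) :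
    Finsupp.weight (xWeight d n) (Finsupp.sumElim a q) = (a.degree : ℤ) := by
  simp [Finsupp.weight_eq_sum, Finsupp.degree_eq_sum, xWeight]

lemma weight_biWeight (a : Fin d →₀ ℕ) (q : Fin n →₀ ℕ) :
    Finsupp.weight (biWeight d n) (Finsupp.sumElim a q) = ((a.degree : ℤ), (q.degree : ℤ)) := by
  simp [Finsupp.weight_eq_sum, Finsupp.degree_eq_sum, biWeight, Prod.ext_iff, Prod.fst_sum,
    Prod.snd_sum]

lemma isWeightedHomogeneous_wx_iff {g : B k d n} {j : ℕ} :
    g.IsWeightedHomogeneous (wx d n) j ↔ g.IsWeightedHomogeneous (xWeight d n) (j : ℤ) := by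
  have hcast : xWeight d n = Nat.castAddMonoidHom ℤ ∘ wx d n :=
    funext (by rintro (_ | _) <;> simp [xWeight, wx])
  rw [hcast]
  exact (isWeightedHomogeneous_map_iff Nat.cast_injective).symm

lemma isWeightedHomogeneous_bwt_iff {g : B k d n} {a b : ℕ} :
    g.IsWeightedHomogeneous (bwt d n) (a, b) ↔
      g.IsWeightedHomogeneous (biWeight d n) ((a : ℤ), (b : ℤ)) := by
  let φ := (Nat.castAddMonoidHom ℤ).prodMap (Nat.castAddMonoidHom ℤ)
  have hcast : biWeight d n = φ ∘ bwt d n :=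
    funext (by rintro (_ | _) <;> simp [biWeight, bwt, φ])
  rw [hcast]
  exact (isWeightedHomogeneous_map_iff (φ := φ)
    (Nat.cast_injective.prodMap Nat.cast_injective)).symm

lemma isWeightedHomogeneous_xWeight {g : B k d n} {p : ℤ × ℤ}
    (hg : g.IsWeightedHomogeneous (biWeight d n) p) :
    g.IsWeightedHomogeneous (xWeight d n) p.1 := by
  have hfst : xWeight d n = AddMonoidHom.fst ℤ ℤ ∘ biWeight d n :=
    funext (by rintro (_ | _) <;> rfl)
  rw [hfst]
  exact isWeightedHomogeneous_map hg _

lemma mem_TcompZ {t : T k n} {j : ℤ} :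
    t ∈ TcompZ k n j ↔ t.IsWeightedHomogeneous (fun _ => (1 : ℤ)) j := by
  rw [TcompZ]
  split_ifs with hj
  · lift j to ℕ using hj
    exact (isWeightedHomogeneous_map_iff (φ := Nat.castAddMonoidHom ℤ) Nat.cast_injective).symm
  · rw [Submodule.mem_bot]
    refine ⟨fun h => h ▸ isWeightedHomogeneous_zero _ _ _, fun h => ?_⟩
    exact eq_zero_of_isWeightedHomogeneous_of_neg (by simp) h (by omega)

lemma xMonomial_isWeightedHomogeneous (a : Fin d →₀ ℕ) :
    (xMonomial a : B k d n).IsWeightedHomogeneous (biWeight d n) ((a.degree : ℤ), 0) :=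
  isWeightedHomogeneous_monomial _ _ _ (by simp [weight_biWeight])

lemma xCoeff_isWeightedHomogeneous {g : B k d n} {p q : ℤ}
    (hg : g.IsWeightedHomogeneous (biWeight d n) (p, q)) (a : Fin d →₀ ℕ) :
    (xCoeff a g).IsWeightedHomogeneous (fun _ => (1 : ℤ)) q := fun e he => by
  rw [coeff_xCoeff] at he
  have := (Prod.mk.inj ((weight_biWeight a e).symm.trans (hg he))).2
  simpa [Finsupp.weight_eq_sum, Finsupp.degree_eq_sum] using this

lemma xCoeff_weightedHomogeneousComponent (a : Fin d →₀ ℕ) (q : ℤ) (g : B k d n) :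
    xCoeff a (weightedHomogeneousComponent (biWeight d n) ((a.degree : ℤ), q) g) =
      weightedHomogeneousComponent (fun _ => (1 : ℤ)) q (xCoeff a g) := by
  classical
  ext e
  have hdeg : Finsupp.weight (fun _ => (1 : ℤ)) e = (e.degree : ℤ) := by
    simp [Finsupp.weight_eq_sum, Finsupp.degree_eq_sum]
  simp only [coeff_xCoeff, coeff_weightedHomogeneousComponent, weight_biWeight, Prod.mk.injEq,
    true_and, hdeg]

end Weights

section Strand

/-- The strand of `B` in `x`-degree `j`, a free `T`-module on the monomials in `x_1, …, x_d` of
degree `j`. -/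
def xStrand (j : ℤ) : Submodule (T k n) (B k d n) where
  carrier := {g | g.IsWeightedHomogeneous (xWeight d n) j}
  add_mem' := IsWeightedHomogeneous.add
  zero_mem' := isWeightedHomogeneous_zero _ _ _
  smul_mem' t g hg := by
    have ht : (rename Sum.inr t : B k d n).IsWeightedHomogeneous (xWeight d n) 0 := fun e he => by
      obtain ⟨q, rfl, -⟩ := coeff_rename_ne_zero _ _ _ he
      simpa [Finsupp.sumElim_eq_add] using weight_xWeight 0 q
    have := ht.mul hg
    rwa [zero_add, ← smul_eq_rename_mul] at this

variable {k d n}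

lemma mem_xStrand {j : ℤ} {g : B k d n} :
    g ∈ xStrand k d n j ↔ g.IsWeightedHomogeneous (xWeight d n) j := Iff.rfl

lemma xMonomial_mem_xStrand (a : Fin d →₀ ℕ) : (xMonomial a : B k d n) ∈ xStrand k d n a.degree :=
  isWeightedHomogeneous_xWeight (xMonomial_isWeightedHomogeneous a)

lemma xStrand_hom_ext {N : Type*} [AddCommGroup N] [Module (T k n) N] {j : ℤ}
    {φ ψ : xStrand k d n j →ₗ[T k n] N}
    (h : ∀ (a : Fin d →₀ ℕ) (ha : (a.degree : ℤ) = j),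
      φ ⟨xMonomial a, ha ▸ xMonomial_mem_xStrand a⟩ =
        ψ ⟨xMonomial a, ha ▸ xMonomial_mem_xStrand a⟩) :
    φ = ψ := by
  refine LinearMap.ext fun ⟨g, hg⟩ => ?_
  induction mem_xStrand.1 hg using IsWeightedHomogeneous.induction_on with
  | zero => exact (map_zero φ).trans (map_zero ψ).symm
  | add g g' hp hp' ih ih' =>
    calc φ ⟨g + g', hg⟩ = φ ⟨g, hp⟩ + φ ⟨g', hp'⟩ := φ.map_add ⟨g, hp⟩ ⟨g', hp'⟩
      _ = ψ ⟨g, hp⟩ + ψ ⟨g', hp'⟩ := congrArg₂ _ (ih hp) (ih' hp')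
      _ = ψ ⟨g + g', hg⟩ := (ψ.map_add ⟨g, hp⟩ ⟨g', hp'⟩).symm
  | monomial e r he =>
    obtain ⟨a, q, rfl⟩ := exists_eq_sumElim e
    rw [weight_xWeight] at he
    let x : xStrand k d n j := ⟨xMonomial a, he ▸ xMonomial_mem_xStrand a⟩
    have hsmul : (⟨_, hg⟩ : xStrand k d n j) = monomial q r • x :=
      Subtype.ext (monomial_sumElim a q r)
    rw [hsmul, map_smul, map_smul, h a he]

end Strand

section Pairing

/-- The exponent of `(x_1 ⋯ x_d) ^ M`, the socle monomial of `B ⧸ (x_1 ^ (M + 1), …, x_d ^ (M + 1))`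
over `T`. -/
def socleExponent (d M : ℕ) : Fin d →₀ ℕ := Finsupp.equivFunOnFinite.symm fun _ => M

/-- The power `x_i ^ (M + 1)`. -/
abbrev xPower (M : ℕ) (i : Fin d) : B k d n := X (Sum.inl i) ^ (M + 1)

/-- The multiplication pairing of `B` with its strand in `x`-degree `j`, followed by the coefficient
of the socle monomial. It presents Macaulay duality for `B ⧸ (x_1 ^ (M + 1), …, x_d ^ (M + 1))`. -/
def soclePairing (M : ℕ) (j : ℤ) : B k d n →ₗ[T k n] xStrand k d n j →ₗ[T k n] T k n :=
  ((LinearMap.mul (T k n) (B k d n)).compr₂ (xCoeff (socleExponent d M))).compl₂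
    (xStrand k d n j).subtype

variable {k d n} {M : ℕ} {j D : ℤ} {w : B k d n}

lemma soclePairing_apply (g : xStrand k d n j) :
    soclePairing k d n M j w g = xCoeff (socleExponent d M) (w * (g : B k d n)) := rfl

lemma mem_span_range_xPower {g : B k d n} :
    g ∈ Ideal.span (Set.range (xPower k d n M)) ↔
      ∀ m ∈ g.support, ∃ i, M + 1 ≤ m (Sum.inl i) := by
  rw [← ofList_map_finRange, mem_ofList_X_pow]
  simp

lemma degree_socleExponent : (socleExponent d M).degree = d * M := by
  simp [socleExponent, Finsupp.degree_eq_sum]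

lemma xCoeff_socleExponent_mul_xMonomial {b : Fin d →₀ ℕ} (hb : b ≤ socleExponent d M) :
    xCoeff (socleExponent d M) (w * xMonomial b) = xCoeff (socleExponent d M - b) w := by
  conv_lhs => rw [← tsub_add_cancel_of_le hb]
  exact xCoeff_mul_xMonomial _ b w

lemma degree_socleExponent_sub {a : Fin d →₀ ℕ} (ha : a ≤ socleExponent d M) :
    ((socleExponent d M - a).degree : ℤ) = d * M - a.degree := by
  have := congrArg Finsupp.degree (tsub_add_cancel_of_le ha)
  rw [map_add, degree_socleExponent] at this
  zify at this
  omega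

lemma xCoeff_socleExponent_eq_zero {g : B k d n}
    (hg : g ∈ Ideal.span (Set.range (xPower k d n M))) :
    xCoeff (socleExponent d M) g = 0 := by
  ext q
  by_contra hq
  rw [coeff_xCoeff] at hq
  obtain ⟨i, hi⟩ := mem_span_range_xPower.1 hg _ (mem_support_iff.2 hq)
  exact absurd hi (by simp [socleExponent])

lemma soclePairing_eq_zero_iff (hw : w ∈ xStrand k d n D) (hD : D + j = d * M) :
    soclePairing k d n M j w = 0 ↔ w ∈ Ideal.span (Set.range (xPower k d n M)) := by
  refine ⟨fun h => mem_span_range_xPower.2 fun m hm => ?_, fun h => LinearMap.ext fun g =>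
    xCoeff_socleExponent_eq_zero (Ideal.mul_mem_right _ _ h)⟩
  by_contra! hlt
  obtain ⟨a, q, rfl⟩ := exists_eq_sumElim m
  have ha : a ≤ socleExponent d M := fun i =>
    Nat.lt_succ_iff.1 (hlt i)
  have hdeg : (a.degree : ℤ) = D := by rw [← weight_xWeight a q, hw (mem_support_iff.1 hm)]
  have hj : ((socleExponent d M - a).degree : ℤ) = j := by
    rw [degree_socleExponent_sub ha]
    linarith
  have hb : (xMonomial (socleExponent d M - a) : B k d n) ∈ xStrand k d n j :=
    hj ▸ xMonomial_mem_xStrand _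
  have hcoeff : xCoeff a w = 0 := by
    rw [← tsub_tsub_cancel_of_le ha, ← xCoeff_socleExponent_mul_xMonomial tsub_le_self]
    exact LinearMap.congr_fun h ⟨_, hb⟩
  rw [mem_support_iff, ← coeff_xCoeff, hcoeff] at hm
  exact hm rfl

lemma le_socleExponent {b : Fin d →₀ ℕ} (hb : (b.degree : ℤ) ≤ M) : b ≤ socleExponent d M :=
  fun i => (Finsupp.le_degree i b).trans (by exact_mod_cast hb)

lemma exists_soclePairing_eq (hj : j ≤ M) (hD : D + j = d * M)
    (φ : xStrand k d n j →ₗ[T k n] T k n) :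
    ∃ w ∈ xStrand k d n D, soclePairing k d n M j w = φ := by
  classical
  let ψ (b : Fin d →₀ ℕ) : T k n :=
    if hb : (b.degree : ℤ) = j then φ ⟨xMonomial b, hb ▸ xMonomial_mem_xStrand b⟩ else 0
  let e := socleExponent d M
  refine ⟨∑ a ∈ Finset.Iic e, ψ (e - a) • xMonomial a, ?_, ?_⟩
  · refine Submodule.sum_mem _ fun a ha => ?_
    by_cases hb : ((e - a).degree : ℤ) = j
    · rw [degree_socleExponent_sub (Finset.mem_Iic.1 ha)] at hb
      have hdeg : (a.degree : ℤ) = D := by linarith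
      exact Submodule.smul_mem _ _ (hdeg ▸ xMonomial_mem_xStrand a)
    · simp only [ψ, dif_neg hb, zero_smul, Submodule.zero_mem]
  · refine xStrand_hom_ext fun b hb => ?_
    have hle : b ≤ e := le_socleExponent (hb.trans_le hj)
    have hmem : e - b ∈ Finset.Iic e := Finset.mem_Iic.2 tsub_le_self
    rw [soclePairing_apply, xCoeff_socleExponent_mul_xMonomial hle]
    simp only [map_sum, map_smul, xCoeff_xMonomial, smul_eq_mul, mul_ite, mul_one, mul_zero]
    rw [Finset.sum_ite_eq, if_pos hmem, tsub_tsub_cancel_of_le hle]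
    exact dif_pos hb

end Pairing

section QuotientStrand

variable {k d n I} {j : ℤ}

lemma xStrand_eq_bot (hj : j < 0) : xStrand k d n j = ⊥ :=
  (Submodule.eq_bot_iff _).2 fun _ hg => eq_zero_of_isWeightedHomogeneous_of_neg
    (by rintro (_ | _) <;> simp [xWeight]) (mem_xStrand.1 hg) hj

lemma SxDegZ_eq_map :
    SxDegZ k d n I j = (xStrand k d n j).map (Ideal.Quotient.mkₐ (T k n) I).toLinearMap := by
  rw [SxDegZ]
  split_ifs with hj
  · lift j to ℕ using hj
    rw [SxDeg, ← Submodule.span_eq (xStrand k d n j), Submodule.map_span]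
    congr! 2
    exact Set.ext fun g => isWeightedHomogeneous_wx_iff
  · rw [xStrand_eq_bot (not_le.1 hj), Submodule.map_bot]

lemma mem_SxDegZ {s : B k d n ⧸ I} :
    s ∈ SxDegZ k d n I j ↔ ∃ g ∈ xStrand k d n j, Ideal.Quotient.mk I g = s := by
  rw [SxDegZ_eq_map]
  rfl

/-- The projection of the strand of `B` in `x`-degree `j` onto the strand of `B ⧸ I`. -/
def toSxDegZ (I : Ideal (B k d n)) (j : ℤ) : xStrand k d n j →ₗ[T k n] SxDegZ k d n I j :=
  (Ideal.Quotient.mkₐ (T k n) I).toLinearMap.restrict fun g hg => mem_SxDegZ.2 ⟨g, hg, rfl⟩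

lemma coe_toSxDegZ (g : xStrand k d n j) :
    (toSxDegZ I j g : B k d n ⧸ I) = Ideal.Quotient.mk I (g : B k d n) := rfl

lemma toSxDegZ_surjective : Function.Surjective (toSxDegZ I j) := fun ⟨_, hs⟩ =>
  let ⟨g, hg, hgs⟩ := mem_SxDegZ.1 hs
  ⟨⟨g, hg⟩, Subtype.ext hgs⟩

lemma toSxDegZ_eq_zero_iff {g : xStrand k d n j} : toSxDegZ I j g = 0 ↔ (g : B k d n) ∈ I := by
  rw [← Submodule.coe_eq_zero, coe_toSxDegZ, Ideal.Quotient.eq_zero_iff_mem]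

lemma exists_comp_toSxDegZ_eq {φ : xStrand k d n j →ₗ[T k n] T k n}
    (hφ : ∀ g : xStrand k d n j, (g : B k d n) ∈ I → φ g = 0) :
    ∃ ψ : SxDegZ k d n I j →ₗ[T k n] T k n, ψ ∘ₗ toSxDegZ I j = φ := by
  have hmem : φ ∈ (toSxDegZ I j).ker.dualAnnihilator :=
    (Submodule.mem_dualAnnihilator _).2 fun g hg => hφ g (toSxDegZ_eq_zero_iff.1 hg)
  rwa [← LinearMap.range_dualMap_eq_dualAnnihilator_ker_of_surjective (toSxDegZ I j)
    toSxDegZ_surjective] at hmem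

lemma mem_H0_of_X_pow_smul_eq_zero {N : ℕ} {s : B k d n ⧸ I}
    (h : ∀ i : Fin d, (X (Sum.inl i) ^ N : B k d n) • s = 0) : s ∈ H0 k d n I := by
  have hle : mxB k d n ≤ (Ideal.torsionOf (B k d n) (B k d n ⧸ I) s).radical := by
    rw [mxB, Ideal.span_le]
    rintro _ ⟨i, rfl⟩
    exact ⟨N, (Ideal.mem_torsionOf_iff _ _).2 (h i)⟩
  obtain ⟨K, hK⟩ := Ideal.exists_pow_le_of_le_radical_of_fg hle (IsNoetherian.noetherian _)
  refine Submodule.mem_iSup_of_mem K ((Submodule.mem_torsionBySet_iff _ _).2 ?_)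
  exact fun ⟨a, ha⟩ => (Ideal.mem_torsionOf_iff _ _).1 (hK ha)

variable (I) in
lemma exists_forall_X_pow_smul_eq_zero : ∃ N₀ : ℕ, ∀ s ∈ H0 k d n I, ∀ N ≥ N₀, ∀ i : Fin d,
    (X (Sum.inl i) ^ N : B k d n) • s = 0 := by
  let torsion : ℕ →o Submodule (B k d n) (B k d n ⧸ I) :=
    { toFun N := Submodule.torsionBySet (B k d n) (B k d n ⧸ I) (mxB k d n ^ N : Ideal (B k d n))
      monotone' _ _ h :=
        Submodule.torsionBySet_le_torsionBySet_of_subset (Ideal.pow_le_pow_right h) }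
  obtain ⟨N₀, hN₀⟩ := WellFoundedGT.monotone_chain_condition torsion
  have hle : H0 k d n I ≤ torsion N₀ := iSup_le fun K => by
    rcases le_total K N₀ with h | h
    exacts [torsion.monotone h, (hN₀ K h).ge]
  refine ⟨N₀, fun s hs N hN i => ?_⟩
  have hX : (X (Sum.inl i) : B k d n) ∈ mxB k d n := Ideal.subset_span ⟨i, rfl⟩
  exact (Submodule.mem_torsionBySet_iff _ _).1 (hle hs)
    ⟨_, Ideal.pow_le_pow_right hN (Ideal.pow_mem_pow hX N)⟩

end QuotientStrand

section SocleLinkage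

variable {k d n}

/-- The linkage between `f_1, …, f_d` and the powers `x_1 ^ (M + 1), …, x_d ^ (M + 1)`. -/
def socleLinkage (f : Fin d → B k d n) (M : ℕ) : Submodule (B k d n) (B k d n × B k d n) :=
  linkage f (xPower k d n M) (List.finRange d)

variable {f : Fin d → B k d n} {γ : Fin d → ℤ × ℤ} {M : ℕ} {i j : ℤ} {u w : B k d n}

lemma isWeaklyRegular_xPower (M : ℕ) : RingTheory.Sequence.IsWeaklyRegular (B k d n)
    ((List.finRange d).map (xPower k d n M)) :=
  isWeaklyRegular_X_pow Sum.inl_injective (List.nodup_finRange d) (M + 1)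

lemma xPower_isWeightedHomogeneous (l : Fin d) :
    (xPower k d n M l).IsWeightedHomogeneous (biWeight d n) ((M : ℤ) + 1, 0) := by
  simpa [biWeight] using (isWeightedHomogeneous_X k (biWeight d n) (Sum.inl l)).pow (M + 1)

lemma weightedHomogeneousComponent_mem_socleLinkage
    (hf : ∀ l, (f l).IsWeightedHomogeneous (biWeight d n) (γ l)) (h : (u, w) ∈ socleLinkage f M)
    {P Q : ℤ × ℤ} (hPQ : P + ((d * (M + 1) : ℤ), 0) = Q + ∑ l, γ l) :
    (weightedHomogeneousComponent (biWeight d n) P u,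
      weightedHomogeneousComponent (biWeight d n) Q w) ∈ socleLinkage f M := by
  refine weightedHomogeneousComponent_mem_linkage hf xPower_isWeightedHomogeneous h ?_
  rw [← Fin.sum_univ_def, ← Fin.sum_univ_def, ← hPQ]
  simp

lemma weightedHomogeneousComponent_xWeight_mem_socleLinkage
    (hf : ∀ l, (f l).IsWeightedHomogeneous (biWeight d n) (γ l)) (h : (u, w) ∈ socleLinkage f M)
    {P Q : ℤ} (hPQ : P + d * (M + 1) = Q + (∑ l, γ l).1) :
    (weightedHomogeneousComponent (xWeight d n) P u,
      weightedHomogeneousComponent (xWeight d n) Q w) ∈ socleLinkage f M := by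
  rw [Prod.fst_sum] at hPQ
  refine weightedHomogeneousComponent_mem_linkage (fun l => isWeightedHomogeneous_xWeight (hf l))
    (fun l => isWeightedHomogeneous_xWeight (xPower_isWeightedHomogeneous l)) h ?_
  rw [← Fin.sum_univ_def, ← Fin.sum_univ_def, ← hPQ]
  simp

lemma exists_left_mem_socleLinkage
    (hf : ∀ l, (f l).IsWeightedHomogeneous (biWeight d n) (γ l))
    (hij : i + j = (∑ l, γ l).1 - d) (hw : w ∈ xStrand k d n (d * M - j))
    (h : ∀ l, f l * w ∈ Ideal.span (Set.range (xPower k d n M))) :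
    ∃ u ∈ xStrand k d n i, (u, w) ∈ socleLinkage f M := by
  obtain ⟨u, hu⟩ := exists_mem_linkage (isWeaklyRegular_xPower M)
    (fun l _ => (ofList_map_finRange (xPower k d n M)).symm ▸ h l)
  refine ⟨_, weightedHomogeneousComponent_isWeightedHomogeneous i u, ?_⟩
  have := weightedHomogeneousComponent_xWeight_mem_socleLinkage hf (swap_mem_linkage hu)
    (P := i) (Q := d * M - j) (by linarith)
  rwa [(mem_xStrand.1 hw).weightedHomogeneousComponent_same] at this

variable (hreg : RingTheory.Sequence.IsWeaklyRegular (B k d n) (List.ofFn f))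

include hreg

lemma exists_right_mem_socleLinkage
    (hf : ∀ l, (f l).IsWeightedHomogeneous (biWeight d n) (γ l))
    (hij : i + j = (∑ l, γ l).1 - d) (hu : u ∈ xStrand k d n i)
    (h : ∀ l, xPower k d n M l * u ∈ Ideal.span (Set.range f)) :
    ∃ w ∈ xStrand k d n (d * M - j), (u, w) ∈ socleLinkage f M := by
  rw [List.ofFn_eq_map] at hreg
  obtain ⟨w, hw⟩ := exists_mem_linkage hreg (fun l _ => (ofList_map_finRange f).symm ▸ h l)
  refine ⟨_, weightedHomogeneousComponent_isWeightedHomogeneous (d * M - j : ℤ) w, ?_⟩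
  have := weightedHomogeneousComponent_xWeight_mem_socleLinkage hf hw
    (P := i) (Q := d * M - j) (by linarith)
  rwa [(mem_xStrand.1 hu).weightedHomogeneousComponent_same] at this

lemma mem_span_range_iff_of_mem_socleLinkage (h : (u, w) ∈ socleLinkage f M) :
    u ∈ Ideal.span (Set.range f) ↔ w ∈ Ideal.span (Set.range (xPower k d n M)) := by
  rw [List.ofFn_eq_map] at hreg
  rw [← ofList_map_finRange, ← ofList_map_finRange]
  exact ⟨right_mem_of_mem_linkage hreg h,
    right_mem_of_mem_linkage (isWeaklyRegular_xPower M) (swap_mem_linkage h)⟩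

lemma mem_span_range_iff_soclePairing_eq_zero (h : (u, w) ∈ socleLinkage f M)
    (hw : w ∈ xStrand k d n (d * M - j)) :
    u ∈ Ideal.span (Set.range f) ↔ soclePairing k d n M j w = 0 := by
  rw [mem_span_range_iff_of_mem_socleLinkage hreg h, soclePairing_eq_zero_iff hw (by ring)]

end SocleLinkage

section StrandGraph

variable {k d n I}

lemma mem_Scomp {s : B k d n ⧸ I} {a b : ℕ} :
    s ∈ Scomp k d n I (a, b) ↔ ∃ g : B k d n,
      g.IsWeightedHomogeneous (biWeight d n) ((a : ℤ), (b : ℤ)) ∧ Ideal.Quotient.mk I g = s := by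
  simp only [← isWeightedHomogeneous_bwt_iff]
  rfl

/-- The graph of the duality isomorphism: the class of `u` corresponds to the functional induced by
pairing with `w` whenever `u` and `w` are linked. -/
def strandGraph (f : Fin d → B k d n) (M : ℕ) (i j : ℤ) :
    Submodule (T k n) (AcompZ k d n (Ideal.span (Set.range f)) i ×
      (SxDegZ k d n (Ideal.span (Set.range f)) j →ₗ[T k n] T k n)) :=
  (((socleLinkage f M).restrictScalars (T k n) ⊓
    (xStrand k d n i).prod (xStrand k d n (d * M - j))).map
      ((Ideal.Quotient.mkₐ (T k n) (Ideal.span (Set.range f))).toLinearMap.prodMap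
        (soclePairing k d n M j))).comap
    ((AcompZ k d n _ i).subtype.prodMap (LinearMap.lcomp (T k n) (T k n) (toSxDegZ _ j)))

variable {f : Fin d → B k d n} {γ : Fin d → ℤ × ℤ} {M : ℕ} {i j : ℤ}

lemma mem_strandGraph {s : AcompZ k d n (Ideal.span (Set.range f)) i}
    {φ : SxDegZ k d n (Ideal.span (Set.range f)) j →ₗ[T k n] T k n} :
    (s, φ) ∈ strandGraph f M i j ↔ ∃ u ∈ xStrand k d n i, ∃ w ∈ xStrand k d n (d * M - j),
      (u, w) ∈ socleLinkage f M ∧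
      Ideal.Quotient.mk _ u = (s : B k d n ⧸ Ideal.span (Set.range f)) ∧
      soclePairing k d n M j w = φ ∘ₗ toSxDegZ _ j := by
  rw [strandGraph, Submodule.mem_comap, Submodule.mem_map]
  constructor
  · rintro ⟨⟨u, w⟩, ⟨h, hu, hw⟩, hc⟩
    exact ⟨u, hu, w, hw, h, congrArg Prod.fst hc, congrArg Prod.snd hc⟩
  · rintro ⟨u, hu, w, hw, h, hs, hφ⟩
    exact ⟨(u, w), ⟨h, hu, hw⟩, Prod.ext hs hφ⟩

lemma exists_left_mem_strandGraph
    (hf : ∀ l, (f l).IsWeightedHomogeneous (biWeight d n) (γ l))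
    (hreg : RingTheory.Sequence.IsWeaklyRegular (B k d n) (List.ofFn f))
    (hij : i + j = (∑ l, γ l).1 - d) (hM : j ≤ M)
    (φ : SxDegZ k d n (Ideal.span (Set.range f)) j →ₗ[T k n] T k n) :
    ∃ s, (s, φ) ∈ strandGraph f M i j := by
  obtain ⟨w, hw, hφ⟩ := exists_soclePairing_eq hM (sub_add_cancel _ j) (φ ∘ₗ toSxDegZ _ j)
  have hfw (l : Fin d) : f l * w ∈ Ideal.span (Set.range (xPower k d n M)) := by
    have hfl := mem_xStrand.2 (isWeightedHomogeneous_xWeight (hf l))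
    refine (soclePairing_eq_zero_iff (j := j - (γ l).1) (hfl.mul hw) (by ring)).1 ?_
    refine LinearMap.ext fun g => ?_
    have hfg : f l * (g : B k d n) ∈ xStrand k d n j := by
      have := mem_xStrand.2 (hfl.mul g.2)
      rwa [add_sub_cancel] at this
    have hzero : toSxDegZ (Ideal.span (Set.range f)) j ⟨f l * g, hfg⟩ = 0 :=
      toSxDegZ_eq_zero_iff.2 (Ideal.mul_mem_right _ _ (Ideal.subset_span ⟨l, rfl⟩))
    calc xCoeff (socleExponent d M) (f l * w * (g : B k d n))
        = soclePairing k d n M j w ⟨f l * g, hfg⟩ := by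
          rw [soclePairing_apply, mul_left_comm, mul_assoc]
      _ = 0 := by rw [hφ, LinearMap.comp_apply, hzero, map_zero]
  obtain ⟨u, hu, huw⟩ := exists_left_mem_socleLinkage hf hij hw hfw
  have htorsion (l : Fin d) : xPower k d n M l * u ∈ Ideal.span (Set.range f) :=
    (mem_span_range_iff_of_mem_socleLinkage hreg (Submodule.smul_mem _ (xPower k d n M l) huw)).2
      (Ideal.mul_mem_right _ _ (Ideal.subset_span ⟨l, rfl⟩))
  exact ⟨⟨Ideal.Quotient.mk _ u, mem_H0_of_X_pow_smul_eq_zero fun l =>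
    Ideal.Quotient.eq_zero_iff_mem.2 (htorsion l), mem_SxDegZ.2 ⟨u, hu, rfl⟩⟩,
    mem_strandGraph.2 ⟨u, hu, w, hw, huw, rfl, hφ⟩⟩

variable (hreg : RingTheory.Sequence.IsWeaklyRegular (B k d n) (List.ofFn f))

include hreg

lemma exists_right_mem_strandGraph
    (hf : ∀ l, (f l).IsWeightedHomogeneous (biWeight d n) (γ l))
    (hij : i + j = (∑ l, γ l).1 - d)
    (hM : ∀ s ∈ H0 k d n (Ideal.span (Set.range f)), ∀ l, xPower k d n M l • s = 0)
    (s : AcompZ k d n (Ideal.span (Set.range f)) i) :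
    ∃ φ, (s, φ) ∈ strandGraph f M i j := by
  obtain ⟨u, hu, hs⟩ := mem_SxDegZ.1 s.2.2
  obtain ⟨w, hw, huw⟩ := exists_right_mem_socleLinkage hreg hf hij hu fun l => by
    have := hM s s.2.1 l
    rw [← hs] at this
    exact Ideal.Quotient.eq_zero_iff_mem.1 this
  obtain ⟨φ, hφ⟩ := exists_comp_toSxDegZ_eq (I := Ideal.span (Set.range f))
    (φ := soclePairing k d n M j w) fun g hg => by
      have hgw := (mem_span_range_iff_of_mem_socleLinkage hreg
        (Submodule.smul_mem _ (g : B k d n) huw)).1 (Ideal.mul_mem_right _ _ hg)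
      rw [soclePairing_apply, mul_comm]
      exact xCoeff_socleExponent_eq_zero hgw
  exact ⟨φ, mem_strandGraph.2 ⟨u, hu, w, hw, huw, hs, hφ.symm⟩⟩

lemma eq_zero_iff_of_mem_strandGraph {s : AcompZ k d n (Ideal.span (Set.range f)) i}
    {φ : SxDegZ k d n (Ideal.span (Set.range f)) j →ₗ[T k n] T k n}
    (h : (s, φ) ∈ strandGraph f M i j) : s = 0 ↔ φ = 0 := by
  obtain ⟨u, -, w, hw, huw, hs, hφ⟩ := mem_strandGraph.1 h
  rw [← Submodule.coe_eq_zero, ← hs, Ideal.Quotient.eq_zero_iff_mem,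
    mem_span_range_iff_soclePairing_eq_zero hreg huw hw, hφ]
  refine ⟨fun h0 => LinearMap.ext fun t => ?_, fun h0 => by rw [h0, LinearMap.zero_comp]⟩
  obtain ⟨g, rfl⟩ := toSxDegZ_surjective t
  exact LinearMap.congr_fun h0 g

lemma exists_equiv_graph_eq_strandGraph
    (hf : ∀ l, (f l).IsWeightedHomogeneous (biWeight d n) (γ l))
    (hij : i + j = (∑ l, γ l).1 - d) :
    ∃ M : ℕ, j ≤ M ∧ ∃ e : AcompZ k d n (Ideal.span (Set.range f)) i ≃ₗ[T k n]
      (SxDegZ k d n (Ideal.span (Set.range f)) j →ₗ[T k n] T k n),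
      strandGraph f M i j = e.toLinearMap.graph := by
  obtain ⟨N, hN⟩ := exists_forall_X_pow_smul_eq_zero (Ideal.span (Set.range f))
  have hj : j ≤ (N + j.toNat : ℕ) := by omega
  refine ⟨N + j.toNat, hj, Submodule.exists_equiv_eq_graph ⟨?_, fun s => ?_⟩ ⟨?_, fun φ => ?_⟩⟩
  · refine (injective_iff_map_eq_zero (LinearMap.fst (T k n) _ _ ∘ₗ Submodule.subtype _)).2 ?_
    rintro ⟨⟨s, φ⟩, h⟩ (rfl : s = 0)
    exact Subtype.ext (Prod.ext rfl ((eq_zero_iff_of_mem_strandGraph hreg h).1 rfl))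
  · obtain ⟨φ, h⟩ := exists_right_mem_strandGraph (M := N + j.toNat) hreg hf hij
      (fun s hs => hN s hs _ (by omega)) s
    exact ⟨⟨(s, φ), h⟩, rfl⟩
  · refine (injective_iff_map_eq_zero (LinearMap.snd (T k n) _ _ ∘ₗ Submodule.subtype _)).2 ?_
    rintro ⟨⟨s, φ⟩, h⟩ (rfl : φ = 0)
    exact Subtype.ext (Prod.ext ((eq_zero_iff_of_mem_strandGraph hreg h).2 rfl) rfl)
  · obtain ⟨s, h⟩ := exists_left_mem_strandGraph hf hreg hij hj φ
    exact ⟨⟨(s, φ), h⟩, rfl⟩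

end StrandGraph

section Homogeneity

variable {k d n} {f : Fin d → B k d n} {γ : Fin d → ℤ × ℤ} {M : ℕ} {j τ : ℤ} {a b : ℕ}
variable {u w : B k d n}

lemma soclePairing_weightedHomogeneousComponent (hj : j ≤ M)
    (e : Fin d →₀ ℕ) (he : (e.degree : ℤ) = j) (q : ℤ) :
    soclePairing k d n M j (weightedHomogeneousComponent (biWeight d n) (d * M - j, q) w)
        ⟨xMonomial e, he ▸ xMonomial_mem_xStrand e⟩ =
      weightedHomogeneousComponent (fun _ => (1 : ℤ)) q
        (soclePairing k d n M j w ⟨xMonomial e, he ▸ xMonomial_mem_xStrand e⟩) := by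
  have hle := le_socleExponent (he.trans_le hj)
  rw [soclePairing_apply, soclePairing_apply, xCoeff_socleExponent_mul_xMonomial hle,
    xCoeff_socleExponent_mul_xMonomial hle, ← xCoeff_weightedHomogeneousComponent,
    degree_socleExponent_sub hle, he]

variable (hf : ∀ l, (f l).IsWeightedHomogeneous (biWeight d n) (γ l))
  (hreg : RingTheory.Sequence.IsWeaklyRegular (B k d n) (List.ofFn f))
  (haj : a + j = (∑ l, γ l).1 - d) (hτ : τ = (∑ l, γ l).2)

include hf haj hτ in
lemma weightedHomogeneousComponent_sub_mem_socleLinkage (h : (u, w) ∈ socleLinkage f M) :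
    (u - weightedHomogeneousComponent (biWeight d n) ((a : ℤ), (b : ℤ)) u,
      w - weightedHomogeneousComponent (biWeight d n) (d * M - j, b - τ) w) ∈ socleLinkage f M :=
  sub_mem h <| weightedHomogeneousComponent_mem_socleLinkage hf h <|
    Prod.ext (by simp; linarith) (by simp [hτ])

include hf hreg haj hτ

lemma mk_mem_Scomp_iff (h : (u, w) ∈ socleLinkage f M) (hw : w ∈ xStrand k d n (d * M - j)) :
    Ideal.Quotient.mk (Ideal.span (Set.range f)) u ∈ Scomp k d n _ (a, b) ↔
      soclePairing k d n M j w =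
        soclePairing k d n M j
          (weightedHomogeneousComponent (biWeight d n) (d * M - j, b - τ) w) := by
  set u' := weightedHomogeneousComponent (biWeight d n) ((a : ℤ), (b : ℤ)) u
  set w' := weightedHomogeneousComponent (biWeight d n) (d * M - j, b - τ) w
  have hu' : u'.IsWeightedHomogeneous (biWeight d n) ((a : ℤ), (b : ℤ)) :=
    weightedHomogeneousComponent_isWeightedHomogeneous _ u
  have hw' : w' ∈ xStrand k d n (d * M - j) :=
    isWeightedHomogeneous_xWeight (weightedHomogeneousComponent_isWeightedHomogeneous _ w)
  have hlink : (u - u', w - w') ∈ socleLinkage f M :=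
    weightedHomogeneousComponent_sub_mem_socleLinkage hf haj hτ h
  rw [← sub_eq_zero, ← map_sub,
    ← mem_span_range_iff_soclePairing_eq_zero hreg hlink (sub_mem hw hw'), ← Ideal.Quotient.eq,
    mem_Scomp]
  refine ⟨?_, fun huu' => ⟨u', hu', huu'.symm⟩⟩
  rintro ⟨g, hg, hgu⟩
  have hcomp := weightedHomogeneousComponent_mem_span_range hf
    (Ideal.Quotient.eq.1 hgu) ((a : ℤ), (b : ℤ))
  rw [map_sub, hg.weightedHomogeneousComponent_same, ← Ideal.Quotient.eq] at hcomp
  exact hgu.symm.trans hcomp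

lemma mem_Scomp_iff_of_mem_strandGraph (hj : j ≤ M)
    {s : AcompZ k d n (Ideal.span (Set.range f)) a}
    {φ : SxDegZ k d n (Ideal.span (Set.range f)) j →ₗ[T k n] T k n}
    (h : (s, φ) ∈ strandGraph f M a j) :
    (s : B k d n ⧸ Ideal.span (Set.range f)) ∈ Scomp k d n _ (a, b) ↔
      ∀ c q : ℕ, (c : ℤ) = j → ∀ t : SxDegZ k d n (Ideal.span (Set.range f)) j,
        (t : B k d n ⧸ Ideal.span (Set.range f)) ∈ Scomp k d n _ (c, q) →
          φ t ∈ TcompZ k n (q + (b - τ)) := by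
  obtain ⟨u, -, w, hw, huw, hs, hφ⟩ := mem_strandGraph.1 h
  rw [← hs, mk_mem_Scomp_iff hf hreg haj hτ huw hw]
  constructor
  · rintro hpair c q rfl t ht
    obtain ⟨g, hg, hgt⟩ := mem_Scomp.1 ht
    let x : xStrand k d n c := ⟨g, isWeightedHomogeneous_xWeight hg⟩
    have hx : t = toSxDegZ _ c x := Subtype.ext hgt.symm
    rw [hx, ← LinearMap.comp_apply, ← hφ, hpair, soclePairing_apply, mem_TcompZ, add_comm (q : ℤ)]
    exact xCoeff_isWeightedHomogeneous
      ((weightedHomogeneousComponent_isWeightedHomogeneous _ w).mul hg) _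
  · refine fun hhom => xStrand_hom_ext fun e he => ?_
    have ht := hhom e.degree 0 he (toSxDegZ _ j ⟨xMonomial e, he ▸ xMonomial_mem_xStrand e⟩)
      (mem_Scomp.2 ⟨_, xMonomial_isWeightedHomogeneous e, rfl⟩)
    rw [Nat.cast_zero, zero_add, ← LinearMap.comp_apply, ← hφ, mem_TcompZ] at ht
    rw [soclePairing_weightedHomogeneousComponent hj e he, ht.weightedHomogeneousComponent_same]

end Homogeneity

theorem strand_duality_general
    (f : Fin d → B k d n) (α β : Fin d → ℕ)
    (hreg : RingTheory.Sequence.IsWeaklyRegular (B k d n) (List.ofFn f))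
    (hbihom : ∀ i, f i ∈ weightedHomogeneousSubmodule k (bwt d n) (α i, β i))
    (hI : I = Ideal.span (Set.range f))
    (δ τ : ℤ) (hδ : δ = (∑ i, (α i : ℤ)) - d) (hτ : τ = ∑ i, (β i : ℤ))
    (i : ℤ) :
    ∃ e : (AcompZ k d n I i) ≃ₗ[T k n] ((SxDegZ k d n I (δ - i)) →ₗ[T k n] T k n),
      (∀ (a b : ℕ), (a : ℤ) = i →
        ∀ s : AcompZ k d n I i, (s : B k d n ⧸ I) ∈ Scomp k d n I (a, b) →
          ∀ (c q : ℕ), (c : ℤ) = δ - i →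
            ∀ t : SxDegZ k d n I (δ - i), (t : B k d n ⧸ I) ∈ Scomp k d n I (c, q) →
              e s t ∈ TcompZ k n ((q : ℤ) + ((b : ℤ) - τ))) ∧
      (∀ (a b : ℕ), (a : ℤ) = i →
        ∀ φ : (SxDegZ k d n I (δ - i)) →ₗ[T k n] T k n,
          (∀ (c q : ℕ), (c : ℤ) = δ - i →
            ∀ t : SxDegZ k d n I (δ - i), (t : B k d n ⧸ I) ∈ Scomp k d n I (c, q) →
              φ t ∈ TcompZ k n ((q : ℤ) + ((b : ℤ) - τ))) →
          ((e.symm φ : AcompZ k d n I i) : B k d n ⧸ I) ∈ Scomp k d n I (a, b)) := by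
  subst hI
  have hf (l : Fin d) : (f l).IsWeightedHomogeneous (biWeight d n) ((α l : ℤ), (β l : ℤ)) :=
    isWeightedHomogeneous_bwt_iff.1 (hbihom l)
  have hdeg : i + (δ - i) = (∑ l, ((α l : ℤ), (β l : ℤ))).1 - d := by
    rw [Prod.fst_sum, add_sub_cancel, hδ]
  have hτ' : τ = (∑ l, ((α l : ℤ), (β l : ℤ))).2 := by rw [Prod.snd_sum, hτ]
  obtain ⟨M, hM, e, he⟩ := exists_equiv_graph_eq_strandGraph hreg hf hdeg
  have hgraph (s) : (s, e s) ∈ strandGraph f M i (δ - i) := he ▸ rfl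
  refine ⟨e, ?_, ?_⟩
  · rintro a b rfl s hs
    exact (mem_Scomp_iff_of_mem_strandGraph hf hreg hdeg hτ' hM (hgraph s)).1 hs
  · rintro a b rfl φ hφ
    refine (mem_Scomp_iff_of_mem_strandGraph hf hreg hdeg hτ' hM (hgraph (e.symm φ))).2 ?_
    rwa [e.apply_symm_apply]

/-- duality, graded strands.  For every integer `i` there is a graded
isomorphism of `T`-modules `A_i ≅ Hom_T(S_{δ−i}, T(−τ))`: a `T`-linear isomorphism which
identifies, for each internal degree `b`, the component `A_{(i,b)}` with the homogeneous
`T`-homomorphisms `S_{δ−i} → T` of degree `b − τ` (i.e. of degree `b` into `T(−τ)`). -/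
theorem strand_duality
    (f : Fin d → B k d n) (α β : Fin d → ℕ)
    (hfm : ∀ i, f i ∈ mxB k d n)
    (hreg : RingTheory.Sequence.IsRegular (B k d n) (List.ofFn f))
    (hbihom : ∀ i, f i ∈ weightedHomogeneousSubmodule k (bwt d n) (α i, β i))
    (hne : ∀ i, f i ≠ 0)
    (hI : I = Ideal.span (Set.range f))
    (δ τ : ℤ) (hδ : δ = (∑ i, (α i : ℤ)) - d) (hτ : τ = ∑ i, (β i : ℤ))
    (i : ℤ) :
    ∃ e : (AcompZ k d n I i) ≃ₗ[T k n] ((SxDegZ k d n I (δ - i)) →ₗ[T k n] T k n),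
      (∀ (a b : ℕ), (a : ℤ) = i →
        ∀ s : AcompZ k d n I i, (s : B k d n ⧸ I) ∈ Scomp k d n I (a, b) →
          ∀ (c q : ℕ), (c : ℤ) = δ - i →
            ∀ t : SxDegZ k d n I (δ - i), (t : B k d n ⧸ I) ∈ Scomp k d n I (c, q) →
              e s t ∈ TcompZ k n ((q : ℤ) + ((b : ℤ) - τ))) ∧
      (∀ (a b : ℕ), (a : ℤ) = i →
        ∀ φ : (SxDegZ k d n I (δ - i)) →ₗ[T k n] T k n,
          (∀ (c q : ℕ), (c : ℤ) = δ - i →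
            ∀ t : SxDegZ k d n I (δ - i), (t : B k d n ⧸ I) ∈ Scomp k d n I (c, q) →
              φ t ∈ TcompZ k n ((q : ℤ) + ((b : ℤ) - τ))) →
          ((e.symm φ : AcompZ k d n I i) : B k d n ⧸ I) ∈ Scomp k d n I (a, b)) := by
  exact strand_duality_general k d n I f α β hreg.toIsWeaklyRegular hbihom hI δ τ hδ hτ i

end Stmt2
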